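/- arXiv:2108.08951 — 4 statements merged into one kernel-verified Lean document; each statement's English description precedes it below -/
import Mathlib

section
/- Let c₁, λ ∈ ℝ and let ψ₁, ψ₂ : ℝ → ℝ be four times continuously differentiable functions such that ψ₁''(x) = c₁·ψ₁(x) for all x and ψ₂''''(y) + 2·c₁·ψ₂''(y) + (c₁² − λ)·ψ₂(y) = 0 for all y. Then the product ψ(x,y) = ψ₁(x)·ψ₂(y) satisfies the bi-Helmholtz equation in Cartesian coordinates on ℝ²: ψ_xxxx + 2·ψ_xxyy + ψ_yyyy = λ·ψ at every point of ℝ². -/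
/-!
On a product, each partial derivative falls on one factor only. Differentiating the equation
for `ψ₁` twice more shows that its fourth derivative is `c₁ ^ 2 * ψ₁`, so the bi-Laplacian of the
product is `ψ₁ x` times the left side of the equation for `ψ₂`, plus `lam * (ψ₁ x * ψ₂ y)`.
-/

/-- Constrained separated solutions: if `ψ₁'' = c₁ψ₁` and `ψ₂` solves the linear
fourth-order separated equation, then `ψ₁(x)·ψ₂(y)` solves the bi-Helmholtz equation. -/
theorem stmt_4 (c₁ lam : ℝ) (ψ₁ ψ₂ : ℝ → ℝ)
    (hψ₁ : ContDiff ℝ 4 ψ₁) (hψ₂ : ContDiff ℝ 4 ψ₂)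
    (h₁ : ∀ x : ℝ, iteratedDeriv 2 ψ₁ x = c₁ * ψ₁ x)
    (h₂ : ∀ y : ℝ,
        iteratedDeriv 4 ψ₂ y + 2 * c₁ * iteratedDeriv 2 ψ₂ y + (c₁ ^ 2 - lam) * ψ₂ y = 0) :
    ∀ x y : ℝ,
      iteratedDeriv 4 (fun s => ψ₁ s * ψ₂ y) x +
        2 * iteratedDeriv 2 (fun s => iteratedDeriv 2 (fun t => ψ₁ s * ψ₂ t) y) x +
        iteratedDeriv 4 (fun t => ψ₁ x * ψ₂ t) y = lam * (ψ₁ x * ψ₂ y) := by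
  intro x y
  have h₄ : iteratedDeriv 4 ψ₁ x = c₁ ^ 2 * ψ₁ x := by
    have hfun : iteratedDeriv 2 ψ₁ = fun s => c₁ * ψ₁ s := funext h₁
    have hsplit : iteratedDeriv 4 ψ₁ = iteratedDeriv 2 (iteratedDeriv 2 ψ₁) := by
      simp only [iteratedDeriv_eq_iterate, Function.iterate_succ, Function.iterate_zero,
        Function.comp_apply, id]
    rw [hsplit, hfun, iteratedDeriv_const_mul_field, h₁]
    ring
  simp only [iteratedDeriv_const_mul_field, iteratedDeriv_mul_const_field, h₄, h₁]
  linear_combination ψ₁ x * h₂ y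
end

section
/- For every c₁ ∈ ℝ and every λ > 0 there exists an infinitely differentiable function ψ : ℝ → ℝ, not identically zero, such that ψ''''(y) + 2·c₁·ψ''(y) + (c₁² − λ)·ψ(y) = 0 for all y ∈ ℝ, and such that there is NO constant c ∈ ℝ with ψ''(y) = c·ψ(y) for all y ∈ ℝ. -/
/-!
With `s = √λ`, the characteristic polynomial of the equation factors in `m = r ^ 2` as
`(m - (-c₁ + s)) * (m - (-c₁ - s))`. Hence the sum `f + g` of eigenfunctions of the second
derivative for the two distinct eigenvalues `-c₁ ± s` is a solution. Normalising
`f 0 = g 0 = 1`, an identity `(f + g)'' = c (f + g)` forces `c = -c₁` at `0`, hence `f = g`,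
and comparing the second derivatives at `0` gives `s = 0`, a contradiction.
-/

/-- Every real `m` is an eigenvalue of the second derivative, with a smooth eigenfunction
normalised at `0`: `cosh (√m y)` if `0 ≤ m`, and `cos (√(-m) y)` otherwise. -/
lemma exists_eigenfunction (m : ℝ) :
    ∃ f : ℝ → ℝ, ContDiff ℝ (⊤ : ℕ∞) f ∧ f 0 = 1 ∧
      iteratedDeriv 2 f = fun y => m * f y := by
  rcases le_or_gt 0 m with hm | hm
  · refine ⟨fun y => Real.cosh (√m * y), by fun_prop, by simp, ?_⟩
    have h1 : deriv (fun y => Real.cosh (√m * y)) = fun y => Real.sinh (√m * y) * √m := by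
      funext y
      simpa using (((hasDerivAt_id y).const_mul (√m)).cosh).deriv
    have h2 : deriv (fun y => Real.sinh (√m * y) * √m)
        = fun y => Real.cosh (√m * y) * √m * √m := by
      funext y
      simpa using ((((hasDerivAt_id y).const_mul (√m)).sinh).mul_const (√m)).deriv
    rw [iteratedDeriv_succ, iteratedDeriv_one, h1, h2]
    funext y
    rw [mul_assoc, Real.mul_self_sqrt hm, mul_comm]
  · refine ⟨fun y => Real.cos (√(-m) * y), by fun_prop, by simp, ?_⟩
    have h1 : deriv (fun y => Real.cos (√(-m) * y))
        = fun y => -Real.sin (√(-m) * y) * √(-m) := by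
      funext y
      simpa using (((hasDerivAt_id y).const_mul (√(-m))).cos).deriv
    have h2 : deriv (fun y => -Real.sin (√(-m) * y) * √(-m))
        = fun y => -(Real.cos (√(-m) * y) * √(-m)) * √(-m) := by
      funext y
      simpa using ((((hasDerivAt_id y).const_mul (√(-m))).sin).neg.mul_const (√(-m))).deriv
    rw [iteratedDeriv_succ, iteratedDeriv_one, h1, h2]
    funext y
    have := Real.mul_self_sqrt (show 0 ≤ -m by linarith)
    linear_combination (-Real.cos (√(-m) * y)) * this

/-- Non-triviality: the linear fourth-order separated equation has smooth solutions
that are not eigenfunctions of the one-dimensional Laplacian. -/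
theorem stmt_5 (c₁ lam : ℝ) (hlam : 0 < lam) :
    ∃ ψ : ℝ → ℝ, ContDiff ℝ (⊤ : ℕ∞) ψ ∧ (∃ y : ℝ, ψ y ≠ 0) ∧
      (∀ y : ℝ,
        iteratedDeriv 4 ψ y + 2 * c₁ * iteratedDeriv 2 ψ y + (c₁ ^ 2 - lam) * ψ y = 0) ∧
      ¬ ∃ c : ℝ, ∀ y : ℝ, iteratedDeriv 2 ψ y = c * ψ y := by
  obtain ⟨f, hf, hf0, hf2⟩ := exists_eigenfunction (-c₁ + √lam)
  obtain ⟨g, hg, hg0, hg2⟩ := exists_eigenfunction (-c₁ - √lam)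
  have hs : 0 < √lam := Real.sqrt_pos.2 hlam
  have hss : √lam * √lam = lam := Real.mul_self_sqrt hlam.le
  -- The second derivative acts diagonally on the span of `f` and `g`.
  have key : ∀ a b : ℝ, iteratedDeriv 2 (fun y => a * f y + b * g y)
      = fun y => a * (-c₁ + √lam) * f y + b * (-c₁ - √lam) * g y := by
    intro a b
    have hf' : ContDiff ℝ 2 f := contDiff_infty.1 hf 2
    have hg' : ContDiff ℝ 2 g := contDiff_infty.1 hg 2
    funext y
    rw [iteratedDeriv_fun_add (by fun_prop) (by fun_prop), iteratedDeriv_const_mul_field,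
      iteratedDeriv_const_mul_field, hf2, hg2]
    ring
  have h2 := key 1 1
  have h4 : iteratedDeriv 4 (fun y => 1 * f y + 1 * g y)
      = iteratedDeriv 2 (iteratedDeriv 2 (fun y => 1 * f y + 1 * g y)) := by
    simp only [iteratedDeriv_eq_iterate, ← Function.iterate_add_apply]
  rw [h2, key] at h4
  refine ⟨fun y => 1 * f y + 1 * g y, by fun_prop, ⟨0, by norm_num [hf0, hg0]⟩, ?_, ?_⟩
  · intro y
    rw [h4, h2]
    linear_combination (f y + g y) * hss
  · rintro ⟨c, hc⟩
    rw [h2] at hc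
    have h0 := hc 0
    simp only [hf0, hg0] at h0
    have hc' : c = -c₁ := by linarith
    have hfg : f = g := by
      funext y
      have := hc y
      rw [hc'] at this
      apply mul_left_cancel₀ hs.ne'
      linear_combination this
    rw [hfg, hg2] at hf2
    have := congrFun hf2 0
    simp only [hg0] at this
    linarith
end

section
/- Let c₂, λ ∈ ℝ, let Θ : ℝ → ℝ be four times continuously differentiable with Θ''(θ) = c₂·Θ(θ) for all θ, and let R : ℝ → ℝ be four times continuously differentiable on (0,∞) and satisfy, for all r > 0, r⁴·R''''(r) + 2·r³·R'''(r) + (2·c₂ − 1)·(r²·R''(r) − r·R'(r)) + (c₂² + 4·c₂ − λ·r⁴)·R(r) = 0. Then w(r,θ) = R(r)·Θ(θ) satisfies, for all r > 0 and all θ, the polar-coordinate bi-Helmholtz equation w_rrrr + (1/r⁴)·w_θθθθ + (2/r)·w_rrr − (1/r²)·w_rr + (1/r³)·w_r + (4/r⁴)·w_θθ − (2/r³)·w_rθθ + (2/r²)·w_rrθθ = λ·w. -/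
/-! Differentiation commutes with multiplication by a constant, so every partial derivative of
`R(r) Θ(θ)` is a derivative of `R` times a derivative of `Θ`. Since `Θ'' = c₂ Θ`, the fourth
derivative of `Θ` is `c₂² Θ`, and the polar equation multiplied by `r⁴` is `Θ(θ)` times the
radial equation. -/

/-- Non-regular separation in polar coordinates: if `Θ'' = c₂Θ` and `R` solves the
linear fourth-order radial equation, then `w(r,θ) = R(r)Θ(θ)` solves the polar
bi-Helmholtz equation `Δ²w = λw` for `r > 0`. -/
theorem stmt_8 (c₂ lam : ℝ) (Θ R : ℝ → ℝ)
    (hΘ : ContDiff ℝ 4 Θ) (hR : ContDiffOn ℝ 4 R (Set.Ioi 0))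
    (hΘ' : ∀ θ : ℝ, iteratedDeriv 2 Θ θ = c₂ * Θ θ)
    (hR' : ∀ r > (0 : ℝ),
      r ^ 4 * iteratedDeriv 4 R r + 2 * r ^ 3 * iteratedDeriv 3 R r +
        (2 * c₂ - 1) * (r ^ 2 * iteratedDeriv 2 R r - r * deriv R r) +
        (c₂ ^ 2 + 4 * c₂ - lam * r ^ 4) * R r = 0) :
    ∀ r > (0 : ℝ), ∀ θ : ℝ,
      iteratedDeriv 4 (fun s => R s * Θ θ) r +
        (1 / r ^ 4) * iteratedDeriv 4 (fun t => R r * Θ t) θ +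
        (2 / r) * iteratedDeriv 3 (fun s => R s * Θ θ) r -
        (1 / r ^ 2) * iteratedDeriv 2 (fun s => R s * Θ θ) r +
        (1 / r ^ 3) * deriv (fun s => R s * Θ θ) r +
        (4 / r ^ 4) * iteratedDeriv 2 (fun t => R r * Θ t) θ -
        (2 / r ^ 3) * deriv (fun s => iteratedDeriv 2 (fun t => R s * Θ t) θ) r +
        (2 / r ^ 2) * iteratedDeriv 2 (fun s => iteratedDeriv 2 (fun t => R s * Θ t) θ) r =
      lam * (R r * Θ θ) := by
  intro r hr θ
  have hΘ2 : iteratedDeriv 2 Θ = fun t => c₂ * Θ t := funext hΘ'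
  have hΘ4 : iteratedDeriv 4 Θ θ = c₂ * (c₂ * Θ θ) := by
    have h : iteratedDeriv 4 Θ = iteratedDeriv 2 (iteratedDeriv 2 Θ) := by
      simp only [iteratedDeriv_eq_iterate, ← Function.iterate_add_apply]
    rw [h, hΘ2, iteratedDeriv_const_mul_field, hΘ']
  have hmul : ∀ (n : ℕ) (c : ℝ),
      iteratedDeriv n (fun s => R s * c) r = iteratedDeriv n R r * c := by
    intro n c
    simp only [mul_comm _ c, iteratedDeriv_const_mul_field]
  simp only [iteratedDeriv_const_mul_field, hmul, hΘ4, hΘ', deriv_mul_const_field]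
  have hr0 : r ≠ 0 := ne_of_gt hr
  have h := hR' r hr
  field_simp
  linear_combination Θ θ * h
end

section
/- Let I and J be nonempty open intervals in ℝ, and let f : I → ℝ and g : J → ℝ be three times continuously differentiable with f'(u) ≠ 0 for all u ∈ I and g'(v) ≠ 0 for all v ∈ J. Suppose that for all u ∈ I and v ∈ J: (f''(u) + g''(v))·(f(u) + g(v)) = f'(u)² + g'(v)². Then there exists a constant k ∈ ℝ such that f'''(u) = k·f'(u) for all u ∈ I and g'''(v) = −k·g'(v) for all v ∈ J. -/
/-!
Differentiating `(f'' + g'')(f + g) = f'² + g'²` in `u` gives `f''' (f + g) = f' (f'' - g'')`, and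
differentiating this in `v` gives `f''' g' = -f' g'''` on `I × J`. Hence `f''' / f' = -g''' / g'`,
where one side depends only on `u` and the other only on `v`, so both are constant. No fourth
derivatives occur, because the second differentiation acts only on functions of `v`.
-/

theorem hasDerivAt_iteratedDeriv_of_contDiffOn {I : Set ℝ} {f : ℝ → ℝ} {n m : ℕ}
    (hI : IsOpen I) (hf : ContDiffOn ℝ n f I) (hm : m < n) {u : ℝ} (hu : u ∈ I) :
    HasDerivAt (iteratedDeriv m f) (iteratedDeriv (m + 1) f u) u := by
  have h : DifferentiableAt ℝ (iteratedDeriv m f) u := by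
    rw [← differentiableWithinAt_univ, ← iteratedDerivWithin_univ]
    have hfu : ContDiffWithinAt ℝ n f Set.univ u := (hf.contDiffAt (hI.mem_nhds hu)).contDiffWithinAt
    exact hfu.differentiableWithinAt_iteratedDerivWithin (by exact_mod_cast hm)
      (by simp)
  rw [iteratedDeriv_succ]
  exact h.hasDerivAt

/-- Separated form of the flatness condition for a Liouville metric:
`(f'' + g'')(f + g) = f'² + g'²` on `I × J` with `f', g' ≠ 0` implies
`f''' = k f'` and `g''' = -k g'` for some constant `k`. -/
theorem stmt_12 (I J : Set ℝ)
    (hIo : IsOpen I) (hIc : I.OrdConnected) (hIne : I.Nonempty)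
    (hJo : IsOpen J) (hJc : J.OrdConnected) (hJne : J.Nonempty)
    (f g : ℝ → ℝ) (hf : ContDiffOn ℝ 3 f I) (hg : ContDiffOn ℝ 3 g J)
    (hf' : ∀ u ∈ I, deriv f u ≠ 0) (hg' : ∀ v ∈ J, deriv g v ≠ 0)
    (hK : ∀ u ∈ I, ∀ v ∈ J,
      (iteratedDeriv 2 f u + iteratedDeriv 2 g v) * (f u + g v) =
        (deriv f u) ^ 2 + (deriv g v) ^ 2) :
    ∃ k : ℝ, (∀ u ∈ I, iteratedDeriv 3 f u = k * deriv f u) ∧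
      (∀ v ∈ J, iteratedDeriv 3 g v = -k * deriv g v) := by
  have hf0 : ∀ u ∈ I, HasDerivAt f (deriv f u) u := fun u hu => by
    simpa using hasDerivAt_iteratedDeriv_of_contDiffOn (n := 3) (m := 0) hIo hf (by norm_num) hu
  have hg0 : ∀ v ∈ J, HasDerivAt g (deriv g v) v := fun v hv => by
    simpa using hasDerivAt_iteratedDeriv_of_contDiffOn (n := 3) (m := 0) hJo hg (by norm_num) hv
  have hf1 : ∀ u ∈ I, HasDerivAt (deriv f) (iteratedDeriv 2 f u) u := fun u hu => by
    simpa using hasDerivAt_iteratedDeriv_of_contDiffOn (n := 3) (m := 1) hIo hf (by norm_num) hu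
  have hf2 : ∀ u ∈ I, HasDerivAt (iteratedDeriv 2 f) (iteratedDeriv 3 f u) u := fun u hu =>
    hasDerivAt_iteratedDeriv_of_contDiffOn (n := 3) (m := 2) hIo hf (by norm_num) hu
  have hg2 : ∀ v ∈ J, HasDerivAt (iteratedDeriv 2 g) (iteratedDeriv 3 g v) v := fun v hv =>
    hasDerivAt_iteratedDeriv_of_contDiffOn (n := 3) (m := 2) hJo hg (by norm_num) hv
  have hKu : ∀ u ∈ I, ∀ v ∈ J, iteratedDeriv 3 f u * (f u + g v) =
      deriv f u * (iteratedDeriv 2 f u - iteratedDeriv 2 g v) := by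
    intro u hu v hv
    have hL := ((hf2 u hu).add_const (iteratedDeriv 2 g v)).fun_mul ((hf0 u hu).add_const (g v))
    have hR := ((hf1 u hu).fun_pow 2).add_const ((deriv g v) ^ 2)
    have hLR := hR.congr_of_eventuallyEq
      (Filter.eventually_of_mem (hIo.mem_nhds hu) fun x hx => hK x hx v hv)
    have := hL.unique hLR
    norm_num at this
    linear_combination this
  have hKuv : ∀ u ∈ I, ∀ v ∈ J, iteratedDeriv 3 f u * deriv g v =
      -(deriv f u * iteratedDeriv 3 g v) := by
    intro u hu v hv
    have hL := ((hg0 v hv).const_add (f u)).const_mul (iteratedDeriv 3 f u)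
    have hR := ((hg2 v hv).const_sub (iteratedDeriv 2 f u)).const_mul (deriv f u)
    have hLR := hR.congr_of_eventuallyEq
      (Filter.eventually_of_mem (hJo.mem_nhds hv) fun y hy => hKu u hu y hy)
    have := hL.unique hLR
    linear_combination this
  obtain ⟨u₀, hu₀⟩ := hIne
  obtain ⟨v₀, hv₀⟩ := hJne
  have hfk : ∀ u ∈ I, iteratedDeriv 3 f u = -(iteratedDeriv 3 g v₀ / deriv g v₀) * deriv f u := by
    intro u hu
    have := hg' v₀ hv₀
    field_simp
    linear_combination hKuv u hu v₀ hv₀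
  refine ⟨_, hfk, fun v hv => mul_left_cancel₀ (hf' u₀ hu₀) ?_⟩
  linear_combination hKuv u₀ hu₀ v hv - deriv g v * hfk u₀ hu₀
end
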